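/- Let 𝕂 be a number field. There is a constant c = c(𝕂) such that the following holds for all sufficiently large y. Let 𝔭 be a prime ideal with y^{1/3} ≤ 𝒩(𝔭) < y^{1/2}, and set u := log y / log 𝒩(𝔭) (so 2 < u ≤ 3). Then |∑_{𝔰∈ℙ, 𝔭 ≼ 𝔰 ≺ 𝔔(y^{1/2})} (y/𝒩(𝔰)) / log(y/𝒩(𝔰)) − (log(u−1)/u) · y/log 𝒩(𝔭)| ≤ c · y / log² y. -/

import Mathlib

open NumberField

open scoped Classical

variable (K : Type*) [Field K] [NumberField K]

/-- The nonzero prime ideals of the ring of integers. -/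
def PrimeIdeal := {p : Ideal (𝓞 K) // p ≠ ⊥ ∧ p.IsPrime}


lemma aux_abel_nonneg (b g : ℕ → ℝ) (hg : ∀ n, 1 ≤ n → g (n+1) ≤ g n) (hg0 : ∀ n, 0 ≤ g n)
    (hb : ∀ m, 0 ≤ ∑ n ∈ Finset.Ioc 0 m, b n) (X : ℕ) :
    0 ≤ ∑ n ∈ Finset.Ioc 0 X, b n * g n := by
  have key : ∀ m, (∑ n ∈ Finset.Ioc 0 m, b n) * g m ≤ ∑ n ∈ Finset.Ioc 0 m, b n * g n := by
    intro m
    induction m with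
    | zero => simp
    | succ m ih =>
      rw [Finset.sum_Ioc_succ_top (Nat.zero_le m), Finset.sum_Ioc_succ_top (Nat.zero_le m), add_mul]
      have : (∑ n ∈ Finset.Ioc 0 m, b n) * g (m+1) ≤ (∑ n ∈ Finset.Ioc 0 m, b n) * g m := by
        rcases Nat.eq_zero_or_pos m with rfl | hm
        · simp
        · exact mul_le_mul_of_nonneg_left (hg m hm) (hb m)
      linarith
  exact le_trans (mul_nonneg (hb X) (hg0 X)) (key X)

lemma aux_sum_rpow (θ : ℝ) (h0 : 0 < θ) (h1 : θ ≤ 1) (X : ℕ) :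
    ∑ n ∈ Finset.Ioc 0 X, (n:ℝ)^(θ-1) ≤ (X:ℝ)^θ/θ := by
  induction X with
  | zero => simp [Real.zero_rpow h0.ne']
  | succ m ih =>
    rw [Finset.sum_Ioc_succ_top (Nat.zero_le m)]
    have hx : (0:ℝ) < ((m+1:ℕ):ℝ) := by positivity
    set x : ℝ := ((m+1:ℕ):ℝ) with hxd
    have hm : (m:ℝ) = x * (1 + (-1/x)) := by
      field_simp; rw [hxd]; push_cast; ring
    have hx1 : 1 ≤ x := by rw [hxd]; push_cast; linarith [(Nat.cast_nonneg m : (0:ℝ) ≤ m)]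
    have hs : -1 ≤ -1/x := by
      rw [le_div_iff₀ hx]; linarith
    have hb := rpow_one_add_le_one_add_mul_self hs h0.le h1
    have h2 : (m:ℝ)^θ ≤ x^θ - θ * x^(θ-1) := by
      rw [hm, Real.mul_rpow hx.le (by linarith)]
      have h3 : x^(θ-1) = x^θ / x := by rw [Real.rpow_sub hx, Real.rpow_one]
      rw [h3]
      calc x^θ * (1 + -1/x)^θ ≤ x^θ * (1 + θ * (-1/x)) :=
            mul_le_mul_of_nonneg_left hb (by positivity)
        _ = _ := by ring
    have h4 : (m:ℝ)^θ/θ ≤ x^θ/θ - x^(θ-1) := by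
      rw [div_le_iff₀ h0, sub_mul, div_mul_cancel₀ _ h0.ne']; linarith
    linarith

lemma aux_sum_Lambda_rpow (θ : ℝ) (h0 : 0 < θ) (h1 : θ ≤ 1) (X : ℕ) :
    ∑ n ∈ Finset.Ioc 0 X, ArithmeticFunction.vonMangoldt n * (n:ℝ)^(θ-1)
      ≤ (Real.log 4 + 4) * ((X:ℝ)^θ/θ) := by
  have h := aux_abel_nonneg (fun n => (Real.log 4 + 4) - ArithmeticFunction.vonMangoldt n)
    (fun n => (n:ℝ)^(θ-1)) (by
      intro n hn
      apply Real.rpow_le_rpow_of_nonpos (by positivity) (by push_cast; linarith) (by linarith))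
    (fun n => by positivity) (by
      intro m
      have := Chebyshev.psi_le_const_mul_self (x := m) (by positivity)
      rw [Chebyshev.psi, Nat.floor_natCast] at this
      rw [Finset.sum_sub_distrib]
      simp
      linarith) X
  simp only [sub_mul, Finset.sum_sub_distrib, ← Finset.mul_sum] at h
  have := mul_le_mul_of_nonneg_left (aux_sum_rpow θ h0 h1 X)
    (by positivity : (0:ℝ) ≤ Real.log 4 + 4)
  linarith

lemma aux_abel_bound (b f : ℕ → ℝ) (z m : ℕ) (hzm : z ≤ m) (C : ℝ) (hf0 : 0 ≤ f m)
    (hf : ∀ n, z ≤ n → n < m → f (n+1) ≤ f n)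
    (hb : ∀ n, z ≤ n → n ≤ m → |∑ k ∈ Finset.Ioc z n, b k| ≤ C) :
    |∑ k ∈ Finset.Ioc z m, b k * f k| ≤ C * f z := by
  have key : ∀ n, z ≤ n → n ≤ m →
      |∑ k ∈ Finset.Ioc z n, b k * f k - (∑ k ∈ Finset.Ioc z n, b k) * f n| ≤ C * (f z - f n) := by
    intro n hn
    induction n, hn using Nat.le_induction with
    | base => simp
    | succ n hn ih =>
      intro hnm
      have ih := ih (by omega)
      rw [Finset.sum_Ioc_succ_top hn, Finset.sum_Ioc_succ_top hn]
      have e : ∑ k ∈ Finset.Ioc z n, b k * f k + b (n+1) * f (n+1)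
          - (∑ k ∈ Finset.Ioc z n, b k + b (n+1)) * f (n+1)
          = (∑ k ∈ Finset.Ioc z n, b k * f k - (∑ k ∈ Finset.Ioc z n, b k) * f n)
            + (∑ k ∈ Finset.Ioc z n, b k) * (f n - f (n+1)) := by ring
      rw [e]
      have h1 : |(∑ k ∈ Finset.Ioc z n, b k) * (f n - f (n+1))| ≤ C * (f n - f (n+1)) := by
        have := hf n hn (by omega)
        rw [abs_mul, abs_of_nonneg (by linarith : 0 ≤ f n - f (n+1))]
        exact mul_le_mul_of_nonneg_right (hb n hn (by omega)) (by linarith)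
      calc _ ≤ _ := abs_add_le _ _
        _ ≤ C * (f z - f n) + C * (f n - f (n+1)) := add_le_add ih h1
        _ = _ := by ring
  have h1 := key m hzm le_rfl
  have h2 : |(∑ k ∈ Finset.Ioc z m, b k) * f m| ≤ C * f m := by
    rw [abs_mul, abs_of_nonneg hf0]
    exact mul_le_mul_of_nonneg_right (hb m hzm le_rfl) hf0
  rw [abs_le] at *
  constructor <;> linarith [h1.1, h1.2, h2.1, h2.2]

lemma aux_gamma (L v w : ℝ) (hL : 0 < L) (hv : L/3 ≤ v) (hvw : v ≤ w) (hw : w ≤ L/2) :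
    1/(w*(L-w)) * (w-v) ≤ (Real.log w - Real.log (L-w))/L - (Real.log v - Real.log (L-v))/L ∧
    (Real.log w - Real.log (L-w))/L - (Real.log v - Real.log (L-v))/L ≤ 1/(v*(L-v)) * (w-v) := by
  rcases hvw.eq_or_lt with rfl | hlt
  · simp
  have hd : ∀ x, L/3 ≤ x → x ≤ L/2 →
      HasDerivAt (fun x => (Real.log x - Real.log (L-x))/L) (1/(x*(L-x))) x := by
    intro x h1 h2
    have hx : 0 < x := by linarith
    have hLx : 0 < L - x := by linarith
    have := (((Real.hasDerivAt_log hx.ne').sub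
      (((hasDerivAt_id x).const_sub L).log hLx.ne')).div_const L)
    refine this.congr_deriv ?_
    simp only [id]
    field_simp
    ring
  obtain ⟨c, hc, hce⟩ := exists_hasDerivAt_eq_slope
    (fun x => (Real.log x - Real.log (L-x))/L) (fun x => 1/(x*(L-x))) hlt
    (fun x hx => (hd x (by linarith [hx.1]) (by linarith [hx.2])).continuousAt.continuousWithinAt)
    (fun x hx => hd x (by linarith [hx.1]) (by linarith [hx.2]))
  rw [eq_div_iff (by linarith)] at hce
  rw [← hce]
  have hc1 := hc.1
  have hc2 := hc.2
  have hv0 : 0 < v := by linarith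
  constructor
  · apply mul_le_mul_of_nonneg_right _ (by linarith)
    apply one_div_le_one_div_of_le
    · exact mul_pos (by linarith) (by linarith)
    · nlinarith
  · apply mul_le_mul_of_nonneg_right _ (by linarith)
    apply one_div_le_one_div_of_le
    · exact mul_pos (by linarith) (by linarith)
    · nlinarith

lemma aux_log_step (k : ℕ) (hk : 1 ≤ k) : Real.log ((k+1:ℕ):ℝ) - Real.log k ≤ 1 ∧
   0 ≤ Real.log ((k+1:ℕ):ℝ) - Real.log k := by
  have hk0 : (1:ℝ) ≤ k := by exact_mod_cast hk
  constructor
  · rw [← Real.log_div (by positivity) (by positivity)]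
    have := Real.log_le_sub_one_of_pos (x := ((k+1:ℕ):ℝ)/k) (by positivity)
    have h2 : ((k+1:ℕ):ℝ)/k = 1 + 1/k := by push_cast; field_simp
    have h3 : 1/(k:ℝ) ≤ 1 := by rw [div_le_one (by positivity)]; exact hk0
    linarith
  · have := Real.log_le_log (x := k) (y := ((k+1:ℕ):ℝ)) (by positivity) (by push_cast; linarith)
    linarith

/-- partial summation from Mertens -/
lemma aux_partial (a : ℕ → ℝ) (ha : ∀ n, 0 ≤ a n) (C : ℝ)
    (hC : ∀ n : ℕ, 1 ≤ n → |∑ k ∈ Finset.Ioc 0 n, a k - Real.log n| ≤ C)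
    (y : ℝ) (hy : 8 ≤ y) (z m : ℕ) (hz : 2 ≤ z) (hz1 : Real.log y / 3 ≤ Real.log z) (hzm : z ≤ m)
    (hm : Real.log m ≤ Real.log y / 2) (hm' : Real.log y / 2 ≤ Real.log ((m+1:ℕ):ℝ))
    (τ : ℝ) (hτ0 : 0 ≤ τ) (hτ : τ ≤ a z * (1 / (Real.log z * (Real.log y - Real.log z)))) :
    |τ + ∑ k ∈ Finset.Ioc z m, a k * (1 / (Real.log k * (Real.log y - Real.log k)))
      - Real.log (Real.log y / Real.log z - 1) / Real.log y| ≤ 6 * (4*C+3) / (Real.log y)^2 := by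
  set L := Real.log y with hLd
  have hL : 0 < L := Real.log_pos (by linarith)
  set f : ℕ → ℝ := fun k => 1 / (Real.log k * (L - Real.log k)) with hf
  have hlogmono : ∀ i j : ℕ, z ≤ i → i ≤ j → Real.log i ≤ Real.log j := fun i j hi hij =>
    Real.log_le_log (by exact_mod_cast (by omega : 0 < i)) (by exact_mod_cast hij)
  have hfz : f z ≤ 6 / L^2 := by
    simp only [hf]
    have h1 := hlogmono z m le_rfl hzm
    rw [div_le_div_iff₀ (mul_pos (by linarith) (by linarith)) (by positivity)]
    nlinarith
  have hfnn : ∀ k, z ≤ k → k ≤ m → 0 ≤ f k := by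
    intro k h1 h2
    have := hlogmono z k le_rfl h1
    have := hlogmono k m h1 h2
    simp only [hf]
    exact one_div_nonneg.mpr (mul_nonneg (by linarith) (by linarith))
  have hfanti : ∀ n, z ≤ n → n < m → f (n+1) ≤ f n := by
    intro n h1 h2
    have a1 := hlogmono z n le_rfl h1
    have a2 := hlogmono n (n+1) h1 (by omega)
    have a3 := hlogmono (n+1) m (by omega) h2
    simp only [hf]
    apply one_div_le_one_div_of_le
    · exact mul_pos (by linarith) (by linarith)
    · nlinarith
  have hfle : ∀ n, z ≤ n → n ≤ m → f n ≤ f z := by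
    intro n h1
    induction n, h1 using Nat.le_induction with
    | base => intro _; exact le_rfl
    | succ n hn ih => intro h; exact (hfanti n hn (by omega)).trans (ih (by omega))
  have hsplit : ∀ (g : ℕ → ℝ) (i j : ℕ), i ≤ j → ∑ k ∈ Finset.Ioc i j, g k
      = ∑ k ∈ Finset.Ioc 0 j, g k - ∑ k ∈ Finset.Ioc 0 i, g k := by
    intro g i j hij
    have := Finset.sum_Ioc_consecutive g (Nat.zero_le i) hij
    linarith
  have htel : ∀ (g : ℕ → ℝ) (j : ℕ), z ≤ j →
      ∑ k ∈ Finset.Ioc z j, (g k - g (k-1)) = g j - g z := by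
    intro g j hj
    induction j, hj using Nat.le_induction with
    | base => simp
    | succ n hn ih => rw [Finset.sum_Ioc_succ_top hn, ih]; simp
  -- first error
  have E1 : |∑ k ∈ Finset.Ioc z m, (a k - (Real.log k - Real.log ((k-1:ℕ):ℝ))) * f k|
      ≤ (2*C) * f z := by
    apply aux_abel_bound _ f z m hzm _ (hfnn m hzm le_rfl) hfanti
    intro n h1 h2
    rw [Finset.sum_sub_distrib, htel (fun k => Real.log (k:ℝ)) n h1, hsplit a z n h1]
    have c1 := abs_le.1 (hC n (by omega))
    have c2 := abs_le.1 (hC z (by omega))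
    rw [abs_le]
    constructor <;> linarith [c1.1, c1.2, c2.1, c2.2]
  set G : ℝ → ℝ := fun w => (Real.log w - Real.log (L-w))/L with hG
  have E2 : ∀ n, z ≤ n → n ≤ m →
      0 ≤ (G (Real.log n) - G (Real.log z))
        - ∑ k ∈ Finset.Ioc z n, (Real.log k - Real.log ((k-1:ℕ):ℝ)) * f k ∧
      (G (Real.log n) - G (Real.log z))
        - ∑ k ∈ Finset.Ioc z n, (Real.log k - Real.log ((k-1:ℕ):ℝ)) * f k ≤ f z - f n := by
    intro n hn
    induction n, hn using Nat.le_induction with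
    | base => simp
    | succ n hn ih =>
      intro hnm
      obtain ⟨i1, i2⟩ := ih (by omega)
      rw [Finset.sum_Ioc_succ_top hn]
      have a1 := hlogmono z n le_rfl hn
      have a2 := hlogmono n (n+1) hn (by omega)
      have a3 := hlogmono (n+1) m (by omega) hnm
      obtain ⟨g1, g2⟩ := aux_gamma L (Real.log n) (Real.log ((n+1:ℕ):ℝ)) hL
        (by linarith) a2 (by linarith)
      obtain ⟨s1, s2⟩ := aux_log_step n (by omega)
      have an := hfanti n hn (by omega)
      have e1 : f (n+1) * (Real.log ((n+1:ℕ):ℝ) - Real.log n)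
        ≤ G (Real.log ((n+1:ℕ):ℝ)) - G (Real.log n) := g1
      have e2 : G (Real.log ((n+1:ℕ):ℝ)) - G (Real.log n)
        ≤ f n * (Real.log ((n+1:ℕ):ℝ) - Real.log n) := g2
      have e3 : (Real.log ((n+1:ℕ):ℝ) - Real.log n) * (f n - f (n+1)) ≤ 1 * (f n - f (n+1)) :=
        mul_le_mul_of_nonneg_right s1 (by linarith)
      simp only [Nat.add_sub_cancel]
      constructor <;> nlinarith
  have E2m := E2 m hzm le_rfl
  have E3 := aux_gamma L (Real.log m) (L/2) hL (by linarith [hlogmono z m le_rfl hzm]) hm le_rfl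
  have hG2 : (Real.log (L/2) - Real.log (L-L/2))/L = 0 := by
    rw [show L - L/2 = L/2 by ring]; simp
  rw [hG2] at E3
  have hGz : G (Real.log z) = - (Real.log (L / Real.log z - 1) / L) := by
    have hlz : 0 < Real.log z := by linarith
    have : 0 < L - Real.log z := by linarith [hlogmono z m le_rfl hzm]
    have e : L / Real.log z - 1 = (L - Real.log z) / Real.log z := by field_simp
    rw [e, Real.log_div this.ne' hlz.ne']
    simp only [hG]; ring
  have hGm : (Real.log (Real.log m) - Real.log (L - Real.log m))/L = G (Real.log m) := rfl
  rw [hGm] at E3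
  have hstep := aux_log_step m (by omega)
  have E3a : 0 ≤ - G (Real.log m) := by
    have : 0 ≤ 1/(L/2*(L-L/2)) * (L/2 - Real.log m) := by
      apply mul_nonneg
      · rw [show L - L/2 = L/2 by ring]; positivity
      · linarith
    linarith [E3.1]
  have E3b : - G (Real.log m) ≤ f z := by
    have h1 : f m * (L/2 - Real.log m) ≤ f m * 1 :=
      mul_le_mul_of_nonneg_left (by linarith [hstep.1]) (hfnn m hzm le_rfl)
    have h2 : 1/(Real.log m*(L-Real.log m)) = f m := rfl
    rw [h2] at E3
    linarith [E3.2, hfle m hzm le_rfl]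
  have haz : a z ≤ 2*C+1 := by
    obtain ⟨w, rfl⟩ : ∃ w, z = w+1 := ⟨z-1, by omega⟩
    have c1 := abs_le.1 (hC (w+1) (by omega))
    have c2 := abs_le.1 (hC w (by omega))
    have s := aux_log_step w (by omega)
    rw [Finset.sum_Ioc_succ_top (Nat.zero_le w)] at c1
    linarith [c1.2, c2.1, s.1]
  have hτ' : τ ≤ (2*C+1) * f z :=
    hτ.trans (mul_le_mul_of_nonneg_right haz (hfnn z le_rfl hzm))
  have hsum : ∑ k ∈ Finset.Ioc z m, a k * f k
    = ∑ k ∈ Finset.Ioc z m, (a k - (Real.log k - Real.log ((k-1:ℕ):ℝ))) * f k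
      + ∑ k ∈ Finset.Ioc z m, (Real.log k - Real.log ((k-1:ℕ):ℝ)) * f k := by
    rw [← Finset.sum_add_distrib]
    apply Finset.sum_congr rfl; intros; ring
  have hC0 : 0 ≤ C := (abs_nonneg _).trans (hC 1 le_rfl)
  have hfin : |τ + ∑ k ∈ Finset.Ioc z m, a k * f k
      - Real.log (L / Real.log z - 1) / L| ≤ (4*C+3) * f z := by
    rw [hsum]
    have hfz0 := hfnn z le_rfl hzm
    have hfm0 := hfnn m hzm le_rfl
    have := abs_le.1 E1
    have hCf := mul_nonneg hC0 hfz0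
    rw [abs_le]
    constructor <;> nlinarith [this.1, this.2, E2m.1, E2m.2]
  calc _ ≤ (4*C+3) * f z := hfin
    _ ≤ (4*C+3) * (6/L^2) := mul_le_mul_of_nonneg_left hfz (by linarith)
    _ = _ := by ring


noncomputable def auxH (x : K) : ℚ := ∑ i, |(integralBasis K).repr x i|

lemma auxH_nonneg (x : K) : 0 ≤ auxH K x := Finset.sum_nonneg fun _ _ => abs_nonneg _

lemma auxH_add (x y : K) : auxH K (x+y) ≤ auxH K x + auxH K y := by
  unfold auxH
  rw [← Finset.sum_add_distrib]
  apply Finset.sum_le_sum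
  intro i _
  simp only [map_add, Finsupp.add_apply]
  exact abs_add_le _ _

lemma auxH_smul (q : ℚ) (x : K) : auxH K (q • x) = |q| * auxH K x := by
  unfold auxH
  rw [Finset.mul_sum]
  apply Finset.sum_congr rfl
  intro i _
  simp [abs_mul]

lemma auxH_sum {J : Type*} (s : Finset J) (f : J → K) :
    auxH K (∑ j ∈ s, f j) ≤ ∑ j ∈ s, auxH K (f j) := by
  induction s using Finset.induction_on with
  | empty => simp [auxH]
  | insert a s ha ih =>
    rw [Finset.sum_insert ha, Finset.sum_insert ha]
    exact (auxH_add K _ _).trans (by linarith)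

lemma auxH_mul : ∃ C : ℕ, ∀ x y : K, auxH K (x*y) ≤ C * auxH K x * auxH K y := by
  obtain ⟨C, hC⟩ := exists_nat_ge (∑ i, ∑ j, auxH K (integralBasis K i * integralBasis K j))
  refine ⟨C, fun x y => ?_⟩
  have hx := (integralBasis K).sum_repr x
  have hy := (integralBasis K).sum_repr y
  have hle : ∀ i j, auxH K (integralBasis K i * integralBasis K j) ≤ C := by
    intro i j
    refine le_trans ?_ hC
    refine le_trans ?_ (Finset.single_le_sum (f := fun i => ∑ j, auxH K (integralBasis K i * integralBasis K j))
      (fun i _ => Finset.sum_nonneg fun j _ => auxH_nonneg K _) (Finset.mem_univ i))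
    exact Finset.single_le_sum (f := fun j => auxH K (integralBasis K i * integralBasis K j))
      (fun j _ => auxH_nonneg K _) (Finset.mem_univ j)
  conv_lhs => rw [← hx, ← hy, Finset.sum_mul_sum]
  refine (auxH_sum K _ _).trans ?_
  calc _ ≤ ∑ i, ∑ j, |(integralBasis K).repr x i| * |(integralBasis K).repr y j| * C := by
        apply Finset.sum_le_sum; intro i _
        refine (auxH_sum K _ _).trans ?_
        apply Finset.sum_le_sum; intro j _
        rw [smul_mul_smul_comm, auxH_smul, abs_mul]
        exact mul_le_mul_of_nonneg_left (hle i j) (by positivity)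
    _ = _ := by
        unfold auxH
        rw [mul_assoc, Finset.sum_mul_sum, Finset.mul_sum]
        apply Finset.sum_congr rfl; intro i _
        rw [Finset.mul_sum]
        apply Finset.sum_congr rfl; intro j _
        ring

lemma auxH_embed : ∃ C : ℕ, ∀ (x : K) (σ : K →+* ℂ), ‖σ x‖ ≤ C * (auxH K x : ℝ) := by
  obtain ⟨C, hC⟩ := exists_nat_ge (∑ σ : K →+* ℂ, ∑ i, ‖σ (integralBasis K i)‖)
  refine ⟨C, fun x σ => ?_⟩
  have hle : ∀ i, ‖σ (integralBasis K i)‖ ≤ C := by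
    intro i
    refine le_trans ?_ hC
    refine le_trans ?_ (Finset.single_le_sum (f := fun σ : K →+* ℂ => ∑ i, ‖σ (integralBasis K i)‖)
      (fun i _ => Finset.sum_nonneg fun j _ => norm_nonneg _) (Finset.mem_univ σ))
    exact Finset.single_le_sum (f := fun i => ‖σ (integralBasis K i)‖)
      (fun j _ => norm_nonneg _) (Finset.mem_univ i)
  conv_lhs => rw [← (integralBasis K).sum_repr x, map_sum]
  refine (norm_sum_le _ _).trans ?_
  unfold auxH
  push_cast
  rw [Finset.mul_sum]
  apply Finset.sum_le_sum; intro i _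
  rw [Algebra.smul_def, map_mul, norm_mul]
  have : ‖σ (algebraMap ℚ K ((integralBasis K).repr x i))‖ = |(((integralBasis K).repr x i : ℚ):ℝ)| := by
    simp
  rw [this, mul_comm]
  exact mul_le_mul_of_nonneg_right (hle i) (abs_nonneg _)

abbrev auxI := Module.Free.ChooseBasisIndex ℤ (𝓞 K)

noncomputable def auxBox (v : 𝓞 K) (lo hi : ℤ) : Finset (𝓞 K) :=
  (Fintype.piFinset fun _ : auxI K => Finset.Ico lo hi).image
    (fun a => v + (RingOfIntegers.basis K).equivFun.symm a)

lemma mem_auxBox (v x : 𝓞 K) (lo hi : ℤ) : x ∈ auxBox K v lo hi ↔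
    ∀ i, lo ≤ (RingOfIntegers.basis K).repr (x - v) i ∧ (RingOfIntegers.basis K).repr (x - v) i < hi := by
  unfold auxBox
  simp only [Finset.mem_image, Fintype.mem_piFinset, Finset.mem_Ico]
  constructor
  · rintro ⟨a, ha, rfl⟩ i
    have := ha i
    have e : (RingOfIntegers.basis K).repr (v + (RingOfIntegers.basis K).equivFun.symm a - v) i = a i := by
      rw [add_sub_cancel_left, ← Module.Basis.equivFun_apply, LinearEquiv.apply_symm_apply]
    rw [e]; exact this
  · intro h
    refine ⟨(RingOfIntegers.basis K).equivFun (x - v), fun i => ?_, ?_⟩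
    · rw [Module.Basis.equivFun_apply]; exact h i
    · rw [LinearEquiv.symm_apply_apply]; ring

lemma card_auxBox (v : 𝓞 K) (lo hi : ℤ) :
    (auxBox K v lo hi).card = (hi - lo).toNat ^ Module.finrank ℚ K := by
  unfold auxBox
  rw [Finset.card_image_of_injective]
  · rw [Fintype.card_piFinset]
    simp only [Int.card_Ico, Finset.prod_const, Finset.card_univ]
    rw [← RingOfIntegers.rank K, Module.finrank_eq_card_chooseBasisIndex]
  · intro a b hab
    exact (RingOfIntegers.basis K).equivFun.symm.injective (add_left_cancel hab)

lemma aux_d_pos : 0 < Module.finrank ℚ K := Module.finrank_pos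

lemma auxH_int (x : 𝓞 K) : auxH K (x : K) = ∑ i, |((RingOfIntegers.basis K).repr x i : ℚ)| := by
  unfold auxH
  apply Finset.sum_congr rfl; intro i _
  rw [integralBasis_repr_apply]; simp

lemma card_auxI : Fintype.card (auxI K) = Module.finrank ℚ K := by
  rw [← RingOfIntegers.rank K, Module.finrank_eq_card_chooseBasisIndex]

/-- small representatives modulo an ideal -/
lemma aux_small_reps : ∃ C : ℕ, 1 ≤ C ∧ ∀ I : Ideal (𝓞 K), I ≠ ⊥ → ∃ δ : ℕ,
    (δ : ℝ) ≤ C * (Ideal.absNorm I : ℝ) ^ ((1:ℝ) / Module.finrank ℚ K) ∧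
    ∀ x : 𝓞 K, ∃ r : 𝓞 K, x - r ∈ I ∧ ∀ i, |(RingOfIntegers.basis K).repr r i| ≤ δ := by
  obtain ⟨C, hC⟩ := auxH_mul K
  set d := Module.finrank ℚ K with hd
  have hd0 : 0 < d := aux_d_pos K
  refine ⟨C * d * d + 1, by omega, fun I hI => ?_⟩
  set N := Ideal.absNorm I with hN
  have hN0 : N ≠ 0 := by rw [hN, Ne, Ideal.absNorm_eq_zero_iff]; exact hI
  set s := ⌊(N:ℝ)^((1:ℝ)/d)⌋₊ with hs
  have hs1 : (s:ℝ) ≤ (N:ℝ)^((1:ℝ)/d) := Nat.floor_le (by positivity)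
  have hs2 : N < (s+1)^d := by
    have h1 : (N:ℝ)^((1:ℝ)/d) < s+1 := Nat.lt_floor_add_one _
    have h2 : ((N:ℝ)^((1:ℝ)/d))^d = N := by
      rw [← Real.rpow_natCast, ← Real.rpow_mul (by positivity)]
      field_simp; simp
    have h3 : ((N:ℝ)^((1:ℝ)/d))^d < ((s:ℝ)+1)^d := pow_lt_pow_left₀ h1 (by positivity) hd0.ne'
    rw [h2] at h3
    exact_mod_cast h3
  have : Finite (𝓞 K ⧸ I) := Ideal.finiteQuotientOfFreeOfNeBot I hI
  have := Fintype.ofFinite (𝓞 K ⧸ I)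
  have hcard : Fintype.card (𝓞 K ⧸ I) = N := by
    rw [hN, Ideal.absNorm_apply, Submodule.cardQuot_apply, ← Nat.card_eq_fintype_card]
  obtain ⟨x, hx, y, hy, hxy, hmk⟩ := Finset.exists_ne_map_eq_of_card_lt_of_maps_to
    (s := auxBox K 0 0 (s+1)) (t := Finset.univ) (f := Ideal.Quotient.mk I)
    (by rw [Finset.card_univ, hcard, card_auxBox]; 
        have : ((s:ℤ) + 1 - 0).toNat = s+1 := by omega
        rw [this]; exact hs2) (fun a _ => Finset.mem_univ _)
  set γ := x - y with hγ
  have hγI : γ ∈ I := Ideal.Quotient.eq.1 hmk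
  have hγ0 : γ ≠ 0 := sub_ne_zero.2 hxy
  have hγs : ∀ i, |(RingOfIntegers.basis K).repr γ i| ≤ s := by
    intro i
    have h1 := (mem_auxBox K _ _ _ _).1 hx i
    have h2 := (mem_auxBox K _ _ _ _).1 hy i
    rw [sub_zero] at h1 h2
    rw [hγ, map_sub, Finsupp.sub_apply, abs_le]
    omega
  have hHγ : auxH K (γ : K) ≤ d * s := by
    rw [auxH_int]
    calc _ ≤ ∑ i : auxI K, (s:ℚ) := by
          apply Finset.sum_le_sum; intro i _
          exact_mod_cast hγs i
      _ = _ := by rw [Finset.sum_const, Finset.card_univ, card_auxI]; simp [hd]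
  have hγK : (γ : K) ≠ 0 := by simpa using hγ0
  refine ⟨C * d * d * s, ?_, fun x => ?_⟩
  · push_cast
    have : (0:ℝ) ≤ C * d * d := by positivity
    nlinarith [Nat.cast_nonneg (α := ℝ) s]
  · set t : K := (x:K) / γ with ht
    set q : 𝓞 K := (RingOfIntegers.basis K).equivFun.symm
      (fun i => ⌊(integralBasis K).repr t i⌋) with hq
    refine ⟨x - γ * q, ?_, ?_⟩
    · rw [sub_sub_cancel]; exact I.mul_mem_right _ hγI
    · have hqr : ∀ i, (RingOfIntegers.basis K).repr q i = ⌊(integralBasis K).repr t i⌋ := by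
        intro i
        rw [← Module.Basis.equivFun_apply, hq, LinearEquiv.apply_symm_apply]
      have e : ((x - γ * q : 𝓞 K) : K) = γ * (t - q) := by
        rw [ht]; push_cast; field_simp
      have h1 : auxH K (t - q) ≤ d := by
        unfold auxH
        calc _ ≤ ∑ i : auxI K, (1:ℚ) := by
              apply Finset.sum_le_sum; intro i _
              rw [map_sub, Finsupp.sub_apply, integralBasis_repr_apply, hqr]
              simp only [algebraMap_int_eq, eq_intCast]
              rw [abs_le]
              constructor
              · linarith [Int.floor_le ((integralBasis K).repr t i)]
              · linarith [Int.lt_floor_add_one ((integralBasis K).repr t i)]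
          _ = _ := by rw [Finset.sum_const, Finset.card_univ, card_auxI]; simp [hd]
      have h2 : auxH K ((x - γ * q : 𝓞 K) : K) ≤ C * d * d * s := by
        rw [e]
        calc _ ≤ C * auxH K (γ:K) * auxH K (t - q) := hC _ _
          _ ≤ C * (d * s) * d := by
            have := auxH_nonneg K (t - q)
            gcongr
          _ = _ := by ring
      intro i
      rw [auxH_int] at h2
      have h3 := (Finset.single_le_sum (f := fun i => |((RingOfIntegers.basis K).repr (x - γ * q) i : ℚ)|)
        (fun i _ => abs_nonneg _) (Finset.mem_univ i)).trans h2
      exact_mod_cast h3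

/-- counting in a box by tiling -/
lemma aux_tiling (I : Ideal (𝓞 K)) (hI : I ≠ ⊥) (δ : ℕ)
    (hδ : ∀ x : 𝓞 K, ∃ r : 𝓞 K, x - r ∈ I ∧ ∀ i, |(RingOfIntegers.basis K).repr r i| ≤ δ)
    (v : 𝓞 K) (M : ℕ) :
    ((auxBox K v 0 M).filter (· ∈ I)).card * Ideal.absNorm I ≤ (M + 2*δ)^Module.finrank ℚ K ∧
    (M - 2*δ)^Module.finrank ℚ K ≤ ((auxBox K v 0 M).filter (· ∈ I)).card * Ideal.absNorm I := by
  have : Finite (𝓞 K ⧸ I) := Ideal.finiteQuotientOfFreeOfNeBot I hI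
  have := Fintype.ofFinite (𝓞 K ⧸ I)
  have hcard : Fintype.card (𝓞 K ⧸ I) = Ideal.absNorm I := by
    rw [Ideal.absNorm_apply, Submodule.cardQuot_apply, ← Nat.card_eq_fintype_card]
  have hrep : ∀ t : 𝓞 K ⧸ I, ∃ r : 𝓞 K, Ideal.Quotient.mk I r = t ∧
      ∀ i, |(RingOfIntegers.basis K).repr r i| ≤ δ := by
    intro t
    obtain ⟨x, rfl⟩ := Ideal.Quotient.mk_surjective t
    obtain ⟨r, h1, h2⟩ := hδ x
    exact ⟨r, (Ideal.Quotient.eq.2 h1).symm, h2⟩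
  choose ρ hρ1 hρ2 using hrep
  set S := (auxBox K v 0 M).filter (· ∈ I) with hS
  have hprod : (S ×ˢ (Finset.univ : Finset (𝓞 K ⧸ I))).card = S.card * Ideal.absNorm I := by
    rw [Finset.card_product, Finset.card_univ, hcard]
  rw [← hprod]
  constructor
  · have e : ((M:ℤ) + δ - (-δ)).toNat = M + 2*δ := by omega
    rw [← e, ← card_auxBox K v (-δ) (M+δ)]
    apply Finset.card_le_card_of_injOn (fun p => p.1 + ρ p.2)
    · rintro ⟨l, t⟩ h
      simp only [Finset.coe_product, Set.mem_prod, Finset.mem_coe, hS, Finset.mem_filter] at h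
      have hb := (mem_auxBox K _ _ _ _).1 h.1.1
      rw [Finset.mem_coe, mem_auxBox]
      intro i
      have h1 := hb i
      have h2 := abs_le.1 (hρ2 t i)
      have e2 : l + ρ t - v = (l - v) + ρ t := by ring
      simp only [e2, map_add, Finsupp.add_apply]
      omega
    · rintro ⟨l, t⟩ h ⟨l', t'⟩ h' heq
      simp only [Finset.coe_product, Set.mem_prod, Finset.mem_coe, hS, Finset.mem_filter] at h h'
      simp only at heq
      have h1 : t = t' := by
        have := congrArg (Ideal.Quotient.mk I) heq
        rw [map_add, map_add, hρ1, hρ1, Ideal.Quotient.eq_zero_iff_mem.2 h.1.2,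
          Ideal.Quotient.eq_zero_iff_mem.2 h'.1.2] at this
        simpa using this
      subst h1
      simpa using heq
  · have e : ((M:ℤ) - δ - δ).toNat = M - 2*δ := by omega
    rw [← e, ← card_auxBox K v δ (M-δ)]
    apply Finset.card_le_card_of_injOn
      (fun b => (b - ρ (Ideal.Quotient.mk I b), Ideal.Quotient.mk I b))
    · intro b hb
      have hb := (mem_auxBox K _ _ _ _).1 hb
      simp only [Finset.coe_product, Set.mem_prod, Finset.mem_coe, hS, Finset.mem_filter,
        Finset.mem_univ, and_true]
      constructor
      · rw [mem_auxBox]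
        intro i
        have h1 := hb i
        have h2 := abs_le.1 (hρ2 (Ideal.Quotient.mk I b) i)
        have e2 : b - ρ (Ideal.Quotient.mk I b) - v = (b - v) - ρ (Ideal.Quotient.mk I b) := by ring
        simp only [e2, map_sub, Finsupp.sub_apply] at h1 ⊢
        omega
      · rw [← Ideal.Quotient.eq, hρ1]
    · intro b _ b' _ h
      simp only [Prod.mk.injEq] at h
      have := h.1
      rw [h.2] at this
      simpa using this


lemma aux_norm_box : ∃ T C₀ : ℕ, 1 ≤ C₀ ∧ ∀ M : ℕ, ∀ α ∈ auxBox K ((T * M : ℕ) : 𝓞 K) 0 M,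
    M ^ Module.finrank ℚ K ≤ Ideal.absNorm (Ideal.span {α}) ∧
    Ideal.absNorm (Ideal.span {α}) ≤ C₀ * M ^ Module.finrank ℚ K := by
  obtain ⟨C, hC⟩ := auxH_embed K
  set d := Module.finrank ℚ K with hd
  refine ⟨C * d + 1, (2*(C*d+1))^d, Nat.one_le_pow _ _ (by omega), fun M α hα => ?_⟩
  rw [mem_auxBox] at hα
  set T := C * d + 1 with hT
  set β : 𝓞 K := α - ((T * M : ℕ) : 𝓞 K) with hβ
  have hHβ : auxH K (β : K) ≤ d * M := by
    rw [auxH_int]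
    calc _ ≤ ∑ i : auxI K, (M:ℚ) := by
          apply Finset.sum_le_sum; intro i _
          have := hα i
          have h2 : |(RingOfIntegers.basis K).repr β i| ≤ M := by rw [abs_le]; omega
          exact_mod_cast h2
      _ = _ := by rw [Finset.sum_const, Finset.card_univ, card_auxI]; simp [hd]
  have hσ : ∀ σ : K →ₐ[ℚ] ℂ, (M:ℝ) ≤ ‖σ (α:K)‖ ∧ ‖σ (α:K)‖ ≤ 2*T*M := by
    intro σ
    have h1 : ‖σ (β:K)‖ ≤ C * (d * M) := by
      refine (hC (β:K) σ.toRingHom).trans ?_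
      apply mul_le_mul_of_nonneg_left _ (by positivity)
      exact_mod_cast hHβ
    have h2 : σ (α:K) = ((T*M:ℕ):ℂ) + σ (β:K) := by
      have : (α:K) = ((T*M:ℕ):K) + (β:K) := by rw [hβ]; push_cast; ring
      rw [this, map_add, map_natCast]
    have h3 : ‖((T*M:ℕ):ℂ)‖ = (T:ℝ)*M := by rw [Complex.norm_natCast]; push_cast; ring
    have h4 := norm_add_le ((T*M:ℕ):ℂ) (σ (β:K))
    have h5 := norm_sub_le (((T*M:ℕ):ℂ) + σ (β:K)) (σ (β:K))
    rw [add_sub_cancel_right] at h5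
    rw [← h2, h3] at h4 h5
    have hTr : (T:ℝ) = C * d + 1 := by rw [hT]; push_cast; ring
    have hM0 : (0:ℝ) ≤ M := by positivity
    constructor <;> nlinarith
  have hn : (Ideal.absNorm (Ideal.span {α}) : ℝ) = ∏ σ : K →ₐ[ℚ] ℂ, ‖σ (α:K)‖ := by
    rw [← norm_prod, ← Algebra.norm_eq_prod_embeddings ℚ ℂ (α:K), ← Algebra.coe_norm_int,
      Ideal.absNorm_span_singleton]
    simp [Nat.cast_natAbs]
  have hcard : (Finset.univ : Finset (K →ₐ[ℚ] ℂ)).card = d := by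
    rw [Finset.card_univ, AlgHom.card]
  constructor
  · have : (M:ℝ)^d ≤ (Ideal.absNorm (Ideal.span {α}) : ℝ) := by
      rw [hn, ← hcard, ← Finset.prod_const]
      exact Finset.prod_le_prod (fun _ _ => by positivity) (fun σ _ => (hσ σ).1)
    exact_mod_cast this
  · have : (Ideal.absNorm (Ideal.span {α}) : ℝ) ≤ (2*T*M:ℝ)^d := by
      rw [hn, ← hcard, ← Finset.prod_const]
      exact Finset.prod_le_prod (fun _ _ => norm_nonneg _) (fun σ _ => (hσ σ).2)
    rw [mul_pow] at this
    exact_mod_cast this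

noncomputable def auxP (X : ℕ) : Finset (Ideal (𝓞 K)) :=
  (Ideal.finite_setOfPred_absNorm_le (S := 𝓞 K) X).toFinset.filter (fun P => P ≠ ⊥ ∧ P.IsPrime)

lemma mem_auxP (X : ℕ) (P : Ideal (𝓞 K)) :
    P ∈ auxP K X ↔ Ideal.absNorm P ≤ X ∧ P ≠ ⊥ ∧ P.IsPrime := by
  simp [auxP]

noncomputable def auxQ (X : ℕ) : Finset (Ideal (𝓞 K) × ℕ) :=
  (auxP K X ×ˢ Finset.Icc 1 X).filter (fun q => Ideal.absNorm q.1 ^ q.2 ≤ X)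

lemma aux_two_le (P : Ideal (𝓞 K)) (h0 : P ≠ ⊥) (hP : P.IsPrime) : 2 ≤ Ideal.absNorm P := by
  have h1 : Ideal.absNorm P ≠ 0 := by rwa [Ne, Ideal.absNorm_eq_zero_iff]
  have h2 : Ideal.absNorm P ≠ 1 := by
    rw [Ne, Ideal.absNorm_eq_one_iff]; exact hP.ne_top
  omega

lemma mem_auxQ (X : ℕ) (P : Ideal (𝓞 K)) (k : ℕ) :
    (P, k) ∈ auxQ K X ↔ (P ≠ ⊥ ∧ P.IsPrime) ∧ 1 ≤ k ∧ Ideal.absNorm P ^ k ≤ X := by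
  unfold auxQ
  simp only [Finset.mem_filter, Finset.mem_product, mem_auxP, Finset.mem_Icc]
  constructor
  · tauto
  · rintro ⟨h, hk, hX⟩
    have h2 := aux_two_le K P h.1 h.2
    have h3 : Ideal.absNorm P ≤ Ideal.absNorm P ^ k := Nat.le_self_pow (by omega) _
    have h4 : k < Ideal.absNorm P ^ k := Nat.lt_pow_self (by omega)
    exact ⟨⟨⟨by omega, h⟩, hk, by omega⟩, hX⟩

lemma aux_pow_dvd (J P : Ideal (𝓞 K)) (hJ : J ≠ ⊥) (h0 : P ≠ ⊥) (hP : P.IsPrime) (k : ℕ) :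
    J ≤ P ^ k ↔ k ≤ (UniqueFactorizationMonoid.normalizedFactors J).count P := by
  have hirr : Irreducible P := (Ideal.prime_of_isPrime h0 hP).irreducible
  rw [← Ideal.dvd_iff_le, pow_dvd_iff_le_emultiplicity,
    UniqueFactorizationMonoid.emultiplicity_eq_count_normalizedFactors hirr hJ, normalize_eq]
  exact_mod_cast Iff.rfl

lemma aux_log_norm (J : Ideal (𝓞 K)) (hJ : J ≠ ⊥) (X : ℕ) (hX : Ideal.absNorm J ≤ X) :
    Real.log (Ideal.absNorm J) = ∑ q ∈ auxQ K X,
      if J ≤ q.1 ^ q.2 then Real.log (Ideal.absNorm q.1) else 0 := by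
  set F := UniqueFactorizationMonoid.normalizedFactors J with hF
  have hJ0 : Ideal.absNorm J ≠ 0 := by rwa [Ne, Ideal.absNorm_eq_zero_iff]
  have hdvd : ∀ P : Ideal (𝓞 K), ∀ k, J ≤ P^k → Ideal.absNorm P ^ k ≤ X := by
    intro P k h
    have := Ideal.absNorm_dvd_absNorm_of_le h
    rw [map_pow] at this
    exact (Nat.le_of_dvd (by omega) this).trans hX
  have hmemF : ∀ P ∈ F, P ≠ ⊥ ∧ P.IsPrime := by
    intro P hP
    have hp := UniqueFactorizationMonoid.prime_of_normalized_factor P hP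
    exact ⟨hp.ne_zero, Ideal.isPrime_of_prime hp⟩
  have hL : Real.log (Ideal.absNorm J) = ∑ P ∈ F.toFinset, F.count P • Real.log (Ideal.absNorm P) := by
    conv_lhs => rw [← Ideal.prod_normalizedFactors_eq_self hJ, ← hF]
    rw [map_multiset_prod, Nat.cast_multiset_prod, Real.log_multiset_prod, Multiset.map_map,
      Multiset.map_map, Finset.sum_multiset_map_count]
    · rfl
    · intro x hx
      simp only [Multiset.mem_map] at hx
      obtain ⟨n, ⟨P, hP, rfl⟩, rfl⟩ := hx
      have := aux_two_le K P (hmemF P hP).1 (hmemF P hP).2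
      positivity
  have hsub : F.toFinset ⊆ auxP K X := by
    intro P hP
    rw [Multiset.mem_toFinset] at hP
    rw [mem_auxP]
    refine ⟨?_, hmemF P hP⟩
    have := hdvd P 1 ((aux_pow_dvd K J P hJ (hmemF P hP).1 (hmemF P hP).2 1).2
      (Multiset.one_le_count_iff_mem.2 hP))
    simpa using this
  rw [hL, Finset.sum_subset hsub (by
    intro P _ hP
    rw [Multiset.mem_toFinset] at hP
    rw [Multiset.count_eq_zero_of_notMem hP, zero_smul])]
  unfold auxQ
  rw [Finset.sum_filter, Finset.sum_product]
  apply Finset.sum_congr rfl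
  intro P hP
  rw [mem_auxP] at hP
  have e : ∀ k ∈ Finset.Icc 1 X, (if Ideal.absNorm P ^ k ≤ X then
      (if J ≤ P ^ k then Real.log (Ideal.absNorm P) else 0) else 0)
      = if k ∈ Finset.Icc 1 (F.count P) then Real.log (Ideal.absNorm P) else 0 := by
    intro k hk
    rw [Finset.mem_Icc] at hk
    have h := aux_pow_dvd K J P hJ hP.2.1 hP.2.2 k
    by_cases h1 : J ≤ P^k
    · rw [if_pos (hdvd P k h1), if_pos h1, if_pos (Finset.mem_Icc.2 ⟨hk.1, h.1 h1⟩)]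
    · rw [if_neg h1, ite_self, if_neg]
      rw [Finset.mem_Icc]
      exact fun h2 => h1 (h.2 h2.2)
  rw [Finset.sum_congr rfl e, ← Finset.sum_filter]
  have hc : F.count P ≤ X := by
    have h1 := hdvd P _ ((aux_pow_dvd K J P hJ hP.2.1 hP.2.2 _).2 le_rfl)
    have h2 := aux_two_le K P hP.2.1 hP.2.2
    have h4 : F.count P < Ideal.absNorm P ^ F.count P := Nat.lt_pow_self (by omega)
    exact h4.le.trans h1
  have e2 : (Finset.Icc 1 X).filter (fun k => k ∈ Finset.Icc 1 (F.count P)) = Finset.Icc 1 (F.count P) := by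
    ext k
    simp only [Finset.mem_filter, Finset.mem_Icc]
    omega
  rw [e2, Finset.sum_const, Nat.card_Icc, Nat.add_sub_cancel]

lemma aux_prime_pow (P : Ideal (𝓞 K)) (h0 : P ≠ ⊥) (hP : P.IsPrime) :
    ∃ p f : ℕ, p.Prime ∧ 1 ≤ f ∧ Ideal.absNorm P = p ^ f ∧ (p : 𝓞 K) ∈ P := by
  have hmax : P.IsMaximal := hP.isMaximal h0
  have : Finite (𝓞 K ⧸ P) := Ideal.finiteQuotientOfFreeOfNeBot P h0
  have := Fintype.ofFinite (𝓞 K ⧸ P)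
  let _ := Ideal.Quotient.field P
  have h := Fintype.isPrimePow_card_of_field (α := 𝓞 K ⧸ P)
  have hcard : Fintype.card (𝓞 K ⧸ P) = Ideal.absNorm P := by
    rw [Ideal.absNorm_apply, Submodule.cardQuot_apply, ← Nat.card_eq_fintype_card]
  rw [hcard, isPrimePow_nat_iff] at h
  obtain ⟨p, f, hp, hf, hpf⟩ := h
  refine ⟨p, f, hp, hf, hpf.symm, ?_⟩
  have := Ideal.absNorm_mem P
  rw [← hpf, Nat.cast_pow] at this
  exact hP.mem_of_pow_mem _ this

lemma aux_sum_Lambda (X : ℕ) (g : ℕ → ℝ) (hg : ∀ n, 0 ≤ g n) :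
    ∑ q ∈ auxQ K X, Real.log (Ideal.absNorm q.1) * g (Ideal.absNorm q.1 ^ q.2)
      ≤ Module.finrank ℚ K * ∑ n ∈ Finset.Ioc 0 X, ArithmeticFunction.vonMangoldt n * g n := by
  have hmaps : ∀ q ∈ auxQ K X, Ideal.absNorm q.1 ^ q.2 ∈ Finset.Ioc 0 X := by
    rintro ⟨P, k⟩ hq
    rw [mem_auxQ] at hq
    have := aux_two_le K P hq.1.1 hq.1.2
    rw [Finset.mem_Ioc]
    exact ⟨by positivity, hq.2.2⟩
  rw [← Finset.sum_fiberwise_of_maps_to hmaps, Finset.mul_sum]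
  apply Finset.sum_le_sum
  intro n _
  have e : ∑ q ∈ auxQ K X with Ideal.absNorm q.1 ^ q.2 = n,
      Real.log (Ideal.absNorm q.1) * g (Ideal.absNorm q.1 ^ q.2)
      = (∑ q ∈ auxQ K X with Ideal.absNorm q.1 ^ q.2 = n, Real.log (Ideal.absNorm q.1)) * g n := by
    rw [Finset.sum_mul]
    apply Finset.sum_congr rfl
    intro q hq
    rw [(Finset.mem_filter.1 hq).2]
  rw [e, ← mul_assoc]
  apply mul_le_mul_of_nonneg_right _ (hg n)
  set S := (auxQ K X).filter (fun q => Ideal.absNorm q.1 ^ q.2 = n) with hS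
  have hSm : ∀ q ∈ S, (q.1 ≠ ⊥ ∧ q.1.IsPrime) ∧ 1 ≤ q.2 ∧ Ideal.absNorm q.1 ^ q.2 = n := by
    rintro ⟨P, k⟩ hq
    rw [hS, Finset.mem_filter, mem_auxQ] at hq
    exact ⟨hq.1.1, hq.1.2.1, hq.2⟩
  have hSp : ∀ q ∈ S, n.minFac.Prime ∧ ((n.minFac : ℕ) : 𝓞 K) ∈ q.1 ∧ IsPrimePow n := by
    intro q hq
    obtain ⟨h1, h2, h3⟩ := hSm q hq
    obtain ⟨p, f, hp, hf, hpf, hmem⟩ := aux_prime_pow K q.1 h1.1 h1.2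
    have : n = p^(f*q.2) := by rw [← h3, hpf, pow_mul]
    have hfk : f * q.2 ≠ 0 := Nat.mul_ne_zero (by omega) (by omega)
    have hm : n.minFac = p := by rw [this, hp.pow_minFac hfk]
    rw [hm]
    exact ⟨hp, hmem, by rw [this]; exact hp.isPrimePow.pow hfk⟩
  rcases S.eq_empty_or_nonempty with hE | ⟨q₀, hq₀⟩
  · rw [hE, Finset.sum_empty]
    exact mul_nonneg (by positivity) ArithmeticFunction.vonMangoldt_nonneg
  obtain ⟨hp, -, hpp⟩ := hSp q₀ hq₀
  rw [ArithmeticFunction.vonMangoldt_apply, if_pos hpp]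
  have hinj : Set.InjOn Prod.fst (S : Set (Ideal (𝓞 K) × ℕ)) := by
    rintro ⟨P, k⟩ h ⟨P', k'⟩ h' heq
    simp only at heq
    subst heq
    have a1 := hSm _ h
    have a2 := hSm _ h'
    have a3 := aux_two_le K P a1.1.1 a1.1.2
    have : k = k' := Nat.pow_right_injective a3 (a1.2.2.trans a2.2.2.symm)
    rw [this]
  have hdvd : ∏ P ∈ S.image Prod.fst, P ∣ Ideal.span {((n.minFac : ℕ) : 𝓞 K)} := by
    apply Finset.prod_primes_dvd
    · intro P hP
      obtain ⟨q, hq, rfl⟩ := Finset.mem_image.1 hP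
      exact Ideal.prime_of_isPrime (hSm q hq).1.1 (hSm q hq).1.2
    · intro P hP
      obtain ⟨q, hq, rfl⟩ := Finset.mem_image.1 hP
      exact Ideal.dvd_span_singleton.2 (hSp q hq).2.1
  have hN := Ideal.absNorm_dvd_absNorm_of_le (Ideal.dvd_iff_le.1 hdvd)
  rw [Ideal.absNorm_span_natCast, RingOfIntegers.rank, map_prod, Finset.prod_image hinj] at hN
  have hN2 := Nat.le_of_dvd (pow_pos hp.pos _) hN
  have hpos : ∀ q ∈ S, (Ideal.absNorm q.1 : ℝ) ≠ 0 := by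
    intro q hq
    have := aux_two_le K q.1 (hSm q hq).1.1 (hSm q hq).1.2
    positivity
  rw [← Real.log_prod hpos, ← Real.log_pow]
  apply Real.log_le_log
  · apply Finset.prod_pos
    intro q hq
    exact lt_of_le_of_ne (by positivity) (hpos q hq).symm
  · exact_mod_cast hN2


lemma aux_count (B : ℕ) (hB : 1 ≤ B) : ∃ E : ℝ, 0 ≤ E ∧ ∀ (v : 𝓞 K) (M : ℕ) (I : Ideal (𝓞 K)), I ≠ ⊥ →
    Ideal.absNorm I ≤ B * M ^ Module.finrank ℚ K →
    |(((auxBox K v 0 M).filter (· ∈ I)).card : ℝ) - (M:ℝ)^Module.finrank ℚ K / Ideal.absNorm I|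
      ≤ E * (M:ℝ)^(Module.finrank ℚ K - 1) *
        (Ideal.absNorm I : ℝ)^((1:ℝ)/Module.finrank ℚ K - 1) := by
  obtain ⟨C, hC1, hC⟩ := aux_small_reps K
  set d := Module.finrank ℚ K with hd
  have hd0 : 0 < d := aux_d_pos K
  refine ⟨2 * C * d * (1 + 2*C*B)^(d-1), by positivity, fun v M I hI hNB => ?_⟩
  obtain ⟨δ, hδ1, hδ2⟩ := hC I hI
  obtain ⟨t1, t2⟩ := aux_tiling K I hI δ hδ2 v M
  rw [← hd] at t1 t2
  set N := Ideal.absNorm I with hN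
  have hN0 : N ≠ 0 := by rw [hN, Ne, Ideal.absNorm_eq_zero_iff]; exact hI
  set c := ((auxBox K v 0 M).filter (· ∈ I)).card with hc
  have hNr : (0:ℝ) < N := by positivity
  have hNθ : (N:ℝ)^((1:ℝ)/d) ≤ B * M := by
    have h1 : (N:ℝ) ≤ ((B:ℝ) * M)^d := by
      have h2 : (N:ℝ) ≤ B * (M:ℝ)^d := by exact_mod_cast hNB
      have h3 : (B:ℝ) ≤ (B:ℝ)^d := by
        exact_mod_cast Nat.le_self_pow hd0.ne' B
      rw [mul_pow]
      exact h2.trans (mul_le_mul_of_nonneg_right h3 (by positivity))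
    calc (N:ℝ)^((1:ℝ)/d) ≤ (((B:ℝ) * M)^d)^((1:ℝ)/d) :=
          Real.rpow_le_rpow hNr.le h1 (by positivity)
      _ = _ := by
          rw [one_div]; exact Real.pow_rpow_inv_natCast (by positivity) hd0.ne'
  have hδM : (δ:ℝ) ≤ C * B * M := by
    calc (δ:ℝ) ≤ C * (N:ℝ)^((1:ℝ)/d) := hδ1
      _ ≤ C * (B * M) := mul_le_mul_of_nonneg_left hNθ (by positivity)
      _ = _ := by ring
  set Z : ℝ := 2 * d * (1 + 2*C*B)^(d-1) * (M:ℝ)^(d-1) * δ with hZ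
  have hup : (c:ℝ) * N - (M:ℝ)^d ≤ Z := by
    have h1 : (c:ℝ) * N ≤ ((M:ℝ) + 2*δ)^d := by exact_mod_cast t1
    have h2 := abs_pow_sub_pow_le ((M:ℝ) + 2*δ) M d
    rw [add_sub_cancel_left, abs_of_nonneg (by positivity : (0:ℝ) ≤ 2*δ),
      abs_of_nonneg (by positivity : (0:ℝ) ≤ (M:ℝ) + 2*δ), abs_of_nonneg (by positivity : (0:ℝ) ≤ (M:ℝ)),
      max_eq_left (by linarith [(Nat.cast_nonneg δ : (0:ℝ) ≤ δ)])] at h2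
    have h3 : ((M:ℝ) + 2*δ)^(d-1) ≤ ((1 + 2*C*B) * M)^(d-1) :=
      pow_le_pow_left₀ (by positivity) (by nlinarith) _
    rw [mul_pow] at h3
    calc (c:ℝ) * N - (M:ℝ)^d ≤ ((M:ℝ) + 2*δ)^d - (M:ℝ)^d := by linarith
      _ ≤ _ := le_abs_self _
      _ ≤ _ := h2
      _ ≤ 2 * δ * d * ((1 + 2*C*B)^(d-1) * (M:ℝ)^(d-1)) :=
          mul_le_mul_of_nonneg_left h3 (by positivity)
      _ = Z := by rw [hZ]; ring
  have hlo : (M:ℝ)^d - (c:ℝ) * N ≤ Z := by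
    have h1 : (((M - 2*δ : ℕ)):ℝ)^d ≤ (c:ℝ) * N := by exact_mod_cast t2
    set m := M - 2*δ with hm
    have h2 := abs_pow_sub_pow_le (M:ℝ) m d
    have hmM : (m:ℝ) ≤ M := by exact_mod_cast (by omega : m ≤ M)
    have hMm : (M:ℝ) - m ≤ 2*δ := by
      have : M ≤ m + 2*δ := by omega
      have : (M:ℝ) ≤ m + 2*δ := by exact_mod_cast this
      linarith
    rw [abs_of_nonneg (by linarith : (0:ℝ) ≤ (M:ℝ) - m),
      abs_of_nonneg (by positivity : (0:ℝ) ≤ (M:ℝ)), abs_of_nonneg (by positivity : (0:ℝ) ≤ (m:ℝ)),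
      max_eq_left hmM] at h2
    have h3 : (1:ℝ) ≤ (1 + 2*C*B)^(d-1) := one_le_pow₀ (by
      have : (0:ℝ) ≤ 2*C*B := by positivity
      linarith)
    calc (M:ℝ)^d - (c:ℝ) * N ≤ (M:ℝ)^d - (m:ℝ)^d := by linarith
      _ ≤ _ := le_abs_self _
      _ ≤ _ := h2
      _ ≤ 2 * δ * d * (M:ℝ)^(d-1) := by gcongr
      _ ≤ 2 * δ * d * (M:ℝ)^(d-1) * (1 + 2*C*B)^(d-1) := le_mul_of_one_le_right (by positivity) h3
      _ = Z := by rw [hZ]; ring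
  have habs : |(c:ℝ) * N - (M:ℝ)^d| ≤ 2 * C * d * (1 + 2*C*B)^(d-1) * (M:ℝ)^(d-1) * (N:ℝ)^((1:ℝ)/d) := by
    have : Z ≤ 2 * d * (1 + 2*C*B)^(d-1) * (M:ℝ)^(d-1) * (C * (N:ℝ)^((1:ℝ)/d)) :=
      mul_le_mul_of_nonneg_left hδ1 (by positivity)
    rw [abs_le]
    constructor <;> linarith
  have e1 : (c:ℝ) - (M:ℝ)^d / N = ((c:ℝ) * N - (M:ℝ)^d) / N := by field_simp
  rw [e1, abs_div, abs_of_pos hNr, div_le_iff₀ hNr, Real.rpow_sub hNr, Real.rpow_one]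
  calc _ ≤ _ := habs
    _ = _ := by field_simp

noncomputable def auxT (X : ℕ) : ℝ :=
  ∑ q ∈ auxQ K X, Real.log (Ideal.absNorm q.1) * (1 / ((Ideal.absNorm q.1 ^ q.2 : ℕ) : ℝ))

lemma aux_mertens_T : ∃ C₀ : ℕ, 1 ≤ C₀ ∧ ∃ D : ℝ, ∀ n : ℕ, 1 ≤ n →
    |auxT K (C₀ * n) - Real.log n| ≤ D := by
  obtain ⟨T, C₀, hC₀, hbox⟩ := aux_norm_box K
  set d := Module.finrank ℚ K with hd
  have hd0 : 0 < d := aux_d_pos K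
  set B := C₀ * 2^d with hB
  have hB1 : 1 ≤ B := Nat.mul_pos hC₀ (by positivity)
  obtain ⟨E, hE0, hE⟩ := aux_count K B hB1
  rw [← hd] at hE
  set E' : ℝ := E * (d * ((Real.log 4 + 4) * (B * d))) with hE'
  refine ⟨C₀, hC₀, E' + (d * Real.log 2 + Real.log C₀), fun n hn => ?_⟩
  set M := ⌊(n:ℝ)^((1:ℝ)/d)⌋₊ with hM
  have hn1 : (1:ℝ) ≤ n := by exact_mod_cast hn
  have hpow : ((n:ℝ)^((1:ℝ)/d))^d = n := by
    rw [one_div]; exact Real.rpow_inv_natCast_pow (by positivity) hd0.ne'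
  have hM1 : 1 ≤ M := by
    rw [hM, Nat.one_le_floor_iff]
    exact Real.one_le_rpow hn1 (by positivity)
  have hMn : M^d ≤ n := by
    have h1 : (M:ℝ) ≤ (n:ℝ)^((1:ℝ)/d) := Nat.floor_le (by positivity)
    have := pow_le_pow_left₀ (by positivity) h1 d
    rw [hpow] at this
    exact_mod_cast this
  have hnM : n ≤ 2^d * M^d := by
    have h1 : (n:ℝ)^((1:ℝ)/d) ≤ ((2 * M : ℕ):ℝ) := by
      have h2 : (n:ℝ)^((1:ℝ)/d) < M + 1 := Nat.lt_floor_add_one _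
      have h3 : (1:ℝ) ≤ M := by exact_mod_cast hM1
      push_cast; linarith
    have := pow_le_pow_left₀ (by positivity) h1 d
    rw [hpow] at this
    rw [← mul_pow]
    exact_mod_cast this
  set X := C₀ * n with hX
  have hXB : X ≤ B * M^d := by
    rw [hX, hB, mul_assoc]; exact Nat.mul_le_mul_left _ hnM
  set A := auxBox K ((T * M : ℕ) : 𝓞 K) 0 M with hA
  have hAcard : A.card = M^d := by rw [hA, card_auxBox]; simp [hd]
  have hMd : (0:ℝ) < (M:ℝ)^d := by
    have : 0 < M := hM1
    positivity
  have hMdN : 0 < M^d := pow_pos hM1 d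
  -- log identity
  have hid : ∑ α ∈ A, Real.log (Ideal.absNorm (Ideal.span {α}))
      = ∑ q ∈ auxQ K X, Real.log (Ideal.absNorm q.1) * ((A.filter (· ∈ q.1^q.2)).card : ℝ) := by
    have h1 : ∀ α ∈ A, Real.log (Ideal.absNorm (Ideal.span {α})) = ∑ q ∈ auxQ K X,
        if Ideal.span {α} ≤ q.1 ^ q.2 then Real.log (Ideal.absNorm q.1) else 0 := by
      intro α hα
      obtain ⟨b1, b2⟩ := hbox M α hα
      apply aux_log_norm
      · intro h
        rw [h, Ideal.absNorm_bot] at b1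
        omega
      · exact b2.trans (Nat.mul_le_mul_left _ hMn)
    rw [Finset.sum_congr rfl h1, Finset.sum_comm]
    apply Finset.sum_congr rfl
    intro q _
    rw [← Finset.sum_filter, Finset.sum_const, nsmul_eq_mul, mul_comm]
    simp only [Ideal.span_singleton_le_iff_mem]
  -- left side
  have hleft : |∑ α ∈ A, Real.log (Ideal.absNorm (Ideal.span {α})) - (M:ℝ)^d * Real.log n|
      ≤ (M:ℝ)^d * (d * Real.log 2 + Real.log C₀) := by
    have h0 : (M:ℝ)^d * Real.log n = ∑ α ∈ A, Real.log n := by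
      rw [Finset.sum_const, hAcard, nsmul_eq_mul]; push_cast; ring
    have h0' : (M:ℝ)^d * (d * Real.log 2 + Real.log C₀) = ∑ α ∈ A, (d * Real.log 2 + Real.log C₀) := by
      rw [Finset.sum_const, hAcard, nsmul_eq_mul]; push_cast; ring
    rw [h0, h0', ← Finset.sum_sub_distrib]
    refine (Finset.abs_sum_le_sum_abs _ _).trans (Finset.sum_le_sum fun α hα => ?_)
    obtain ⟨b1, b2⟩ := hbox M α hα
    have c1 : Real.log ((M:ℝ)^d) ≤ Real.log (Ideal.absNorm (Ideal.span {α})) :=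
      Real.log_le_log hMd (by exact_mod_cast b1)
    have c2 : Real.log (Ideal.absNorm (Ideal.span {α})) ≤ Real.log (C₀ * n) := by
      apply Real.log_le_log
      · exact_mod_cast (by omega : 0 < Ideal.absNorm (Ideal.span {α}))
      · exact_mod_cast b2.trans (Nat.mul_le_mul_left _ hMn)
    have c3 : Real.log n ≤ Real.log (2^d * (M:ℝ)^d) :=
      Real.log_le_log (by linarith) (by exact_mod_cast hnM)
    rw [Real.log_mul (by positivity) hMd.ne', Real.log_pow] at c3
    have hC0r : (1:ℝ) ≤ C₀ := by exact_mod_cast hC₀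
    rw [Real.log_mul (by positivity) (by positivity)] at c2
    have : 0 ≤ Real.log C₀ := Real.log_nonneg hC0r
    have : 0 ≤ d * Real.log 2 := by positivity
    rw [abs_le]
    constructor <;> linarith
  -- right side
  have hθ0 : (0:ℝ) < 1/d := by positivity
  have hθ1 : (1:ℝ)/d ≤ 1 := by
    rw [div_le_one (by positivity)]; exact_mod_cast hd0
  have hXθ : (X:ℝ)^((1:ℝ)/d) ≤ B * M := by
    have h1 : (X:ℝ) ≤ ((B:ℝ) * M)^d := by
      have h2 : (X:ℝ) ≤ B * (M:ℝ)^d := by exact_mod_cast hXB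
      have h3 : (B:ℝ) ≤ (B:ℝ)^d := by
        exact_mod_cast Nat.le_self_pow hd0.ne' B
      rw [mul_pow]
      exact h2.trans (mul_le_mul_of_nonneg_right h3 (by positivity))
    calc (X:ℝ)^((1:ℝ)/d) ≤ (((B:ℝ) * M)^d)^((1:ℝ)/d) :=
          Real.rpow_le_rpow (by positivity) h1 (by positivity)
      _ = _ := by
          rw [one_div]; exact Real.pow_rpow_inv_natCast (by positivity) hd0.ne'
  have hright : |∑ q ∈ auxQ K X, Real.log (Ideal.absNorm q.1) * ((A.filter (· ∈ q.1^q.2)).card : ℝ)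
      - (M:ℝ)^d * auxT K X| ≤ (M:ℝ)^d * E' := by
    unfold auxT
    rw [Finset.mul_sum, ← Finset.sum_sub_distrib]
    have hterm : ∀ q ∈ auxQ K X, |Real.log (Ideal.absNorm q.1) * ((A.filter (· ∈ q.1^q.2)).card : ℝ)
        - (M:ℝ)^d * (Real.log (Ideal.absNorm q.1) * (1 / ((Ideal.absNorm q.1 ^ q.2 : ℕ) : ℝ)))|
        ≤ E * (M:ℝ)^(d-1) * (Real.log (Ideal.absNorm q.1) *
          ((Ideal.absNorm q.1 ^ q.2 : ℕ) : ℝ)^((1:ℝ)/d - 1)) := by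
      rintro ⟨P, k⟩ hq
      rw [mem_auxQ] at hq
      obtain ⟨hP, hk, hle⟩ := hq
      have hl : 0 ≤ Real.log (Ideal.absNorm P) := Real.log_natCast_nonneg _
      have h1 := hE ((T * M : ℕ) : 𝓞 K) M (P^k) (pow_ne_zero k hP.1)
        (by rw [map_pow]; exact hle.trans hXB)
      rw [map_pow, ← hA] at h1
      have e : Real.log (Ideal.absNorm P) * ((A.filter (· ∈ P^k)).card : ℝ)
        - (M:ℝ)^d * (Real.log (Ideal.absNorm P) * (1 / ((Ideal.absNorm P ^ k : ℕ) : ℝ)))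
        = Real.log (Ideal.absNorm P) * (((A.filter (· ∈ P^k)).card : ℝ) -
          (M:ℝ)^d / ((Ideal.absNorm P ^ k : ℕ) : ℝ)) := by ring
      simp only
      rw [e, abs_mul, abs_of_nonneg hl]
      calc _ ≤ _ := mul_le_mul_of_nonneg_left h1 hl
        _ = _ := by ring
    refine (Finset.abs_sum_le_sum_abs _ _).trans ((Finset.sum_le_sum hterm).trans ?_)
    rw [← Finset.mul_sum]
    have h1 := aux_sum_Lambda K X (fun n => (n:ℝ)^((1:ℝ)/d - 1)) (fun n => by positivity)
    have h2 := aux_sum_Lambda_rpow ((1:ℝ)/d) hθ0 hθ1 X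
    rw [← hd] at h1
    calc _ ≤ E * (M:ℝ)^(d-1) * (d * ((Real.log 4 + 4) * ((X:ℝ)^((1:ℝ)/d)/((1:ℝ)/d)))) := by
          apply mul_le_mul_of_nonneg_left _ (by positivity)
          exact h1.trans (mul_le_mul_of_nonneg_left h2 (by positivity))
      _ ≤ E * (M:ℝ)^(d-1) * (d * ((Real.log 4 + 4) * ((B * M)/((1:ℝ)/d)))) := by
          gcongr
      _ = E' * ((M:ℝ)^(d-1) * M) := by rw [hE']; field_simp
      _ = _ := by rw [← pow_succ, Nat.sub_add_cancel hd0]; ring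
  rw [hid] at hleft
  have hcomb : (M:ℝ)^d * |auxT K X - Real.log n| ≤ (M:ℝ)^d * (E' + (d * Real.log 2 + Real.log C₀)) := by
    rw [← abs_of_pos hMd, ← abs_mul, abs_of_pos hMd, mul_sub, mul_add]
    have r1 := abs_le.1 hleft
    have r2 := abs_le.1 hright
    rw [abs_le]
    constructor <;> linarith [r1.1, r1.2, r2.1, r2.2]
  exact le_of_mul_le_mul_left hcomb hMd

noncomputable def auxS (X : ℕ) : ℝ :=
  ∑ P ∈ auxP K X, Real.log (Ideal.absNorm P) / (Ideal.absNorm P : ℝ)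

lemma auxS_nonneg (X : ℕ) : 0 ≤ auxS K X :=
  Finset.sum_nonneg fun _ _ => div_nonneg (Real.log_natCast_nonneg _) (by positivity)

lemma auxS_mono {X Y : ℕ} (h : X ≤ Y) : auxS K X ≤ auxS K Y := by
  apply Finset.sum_le_sum_of_subset_of_nonneg
  · intro P; rw [mem_auxP, mem_auxP]; rintro ⟨a, b⟩; exact ⟨a.trans h, b⟩
  · exact fun _ _ _ => div_nonneg (Real.log_natCast_nonneg _) (by positivity)

lemma aux_T_S : ∃ D : ℝ, ∀ X : ℕ, auxS K X ≤ auxT K X ∧ auxT K X ≤ auxS K X + D := by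
  have hsum := ArithmeticFunction.vonMangoldt.summable_residueClass_non_primes_div (q := 1) 0
  set h : ℕ → ℝ := fun n => (if Nat.Prime n then 0 else
    ArithmeticFunction.vonMangoldt.residueClass (0 : ZMod 1) n) / n with hh
  have hres : ∀ n, ArithmeticFunction.vonMangoldt.residueClass (0 : ZMod 1) n
      = ArithmeticFunction.vonMangoldt n := by
    intro n
    unfold ArithmeticFunction.vonMangoldt.residueClass
    rw [Set.indicator_of_mem]
    exact Subsingleton.elim _ _
  refine ⟨Module.finrank ℚ K * ∑' n, h n, fun X => ?_⟩
  have hSS : auxS K X = ∑ q ∈ (auxQ K X).filter (fun q => q.2 = 1),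
      Real.log (Ideal.absNorm q.1) * (1 / ((Ideal.absNorm q.1 ^ q.2 : ℕ) : ℝ)) := by
    unfold auxS
    apply Finset.sum_bij (fun P _ => (P, 1))
    · intro P hP
      rw [mem_auxP] at hP
      rw [Finset.mem_filter, mem_auxQ]
      exact ⟨⟨hP.2, le_rfl, by simpa using hP.1⟩, rfl⟩
    · intro P _ P' _ h; simpa using h
    · rintro ⟨P, k⟩ hq
      rw [Finset.mem_filter, mem_auxQ] at hq
      simp only at hq
      obtain ⟨⟨h1, h2, h3⟩, rfl⟩ := hq
      refine ⟨P, ?_, rfl⟩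
      rw [mem_auxP]
      exact ⟨by simpa using h3, h1⟩
    · intro P _
      simp only [pow_one]
      ring
  have hsplit := Finset.sum_filter_add_sum_filter_not (auxQ K X) (fun q => q.2 = 1)
    (fun q => Real.log (Ideal.absNorm q.1) * (1 / ((Ideal.absNorm q.1 ^ q.2 : ℕ) : ℝ)))
  rw [← hSS] at hsplit
  have hT : auxT K X = _ := hsplit.symm
  have hnn : ∀ q : Ideal (𝓞 K) × ℕ, 0 ≤ Real.log (Ideal.absNorm q.1) * (1 / ((Ideal.absNorm q.1 ^ q.2 : ℕ) : ℝ)) :=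
    fun q => mul_nonneg (Real.log_natCast_nonneg _) (by positivity)
  rw [hT]
  constructor
  · exact le_add_of_nonneg_right (Finset.sum_nonneg fun q _ => hnn q)
  · apply add_le_add_right
    set g : ℕ → ℝ := fun n => if n.Prime then 0 else 1 / (n:ℝ) with hg
    have hg0 : ∀ n, 0 ≤ g n := by
      intro n; simp only [hg]; split_ifs <;> positivity
    calc _ ≤ ∑ q ∈ auxQ K X, Real.log (Ideal.absNorm q.1) * g (Ideal.absNorm q.1 ^ q.2) := by
          have : ∀ q ∈ (auxQ K X).filter (fun q => ¬ q.2 = 1),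
              Real.log (Ideal.absNorm q.1) * (1 / ((Ideal.absNorm q.1 ^ q.2 : ℕ) : ℝ))
              = Real.log (Ideal.absNorm q.1) * g (Ideal.absNorm q.1 ^ q.2) := by
            rintro ⟨P, k⟩ hq
            rw [Finset.mem_filter, mem_auxQ] at hq
            simp only [hg]
            rw [if_neg]
            exact Nat.Prime.not_prime_pow' hq.2
          rw [Finset.sum_congr rfl this]
          apply Finset.sum_le_sum_of_subset_of_nonneg (Finset.filter_subset _ _)
          exact fun q _ _ => mul_nonneg (Real.log_natCast_nonneg _) (hg0 _)
      _ ≤ _ := aux_sum_Lambda K X g hg0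
      _ ≤ _ := by
          apply mul_le_mul_of_nonneg_left _ (by positivity)
          have e : ∀ n ∈ Finset.Ioc 0 X, ArithmeticFunction.vonMangoldt n * g n = h n := by
            intro n _
            simp only [hg, hh, hres]
            split_ifs
            · simp
            · ring
          rw [Finset.sum_congr rfl e]
          apply hsum.sum_le_tsum
          intro n _
          simp only [hh, hres]
          split_ifs
          · simp
          · exact div_nonneg ArithmeticFunction.vonMangoldt_nonneg (by positivity)

lemma aux_mertens : ∃ C : ℝ, ∀ n : ℕ, 1 ≤ n → |auxS K n - Real.log n| ≤ C := by
  obtain ⟨C₀, hC₀, D, hD⟩ := aux_mertens_T K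
  obtain ⟨D', hD'⟩ := aux_T_S K
  have hDn : 0 ≤ D := (abs_nonneg _).trans (hD 1 le_rfl)
  have hDn' : 0 ≤ D' := by have := hD' 0; linarith [this.1, this.2]
  have hC0r : (1:ℝ) ≤ C₀ := by exact_mod_cast hC₀
  have hl0 : 0 ≤ Real.log C₀ := Real.log_nonneg hC0r
  have hl2 : 0 ≤ Real.log 2 := by positivity
  refine ⟨Real.log 2 + Real.log C₀ + D + D', fun m hm => ?_⟩
  set n := m / C₀ with hn
  have hm1 : (1:ℝ) ≤ m := by exact_mod_cast hm
  have hnm : n ≤ m := Nat.div_le_self _ _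
  have h1 : C₀ * n ≤ m := Nat.mul_div_le _ _
  have h2 : m < C₀ * (n+1) := Nat.lt_mul_div_succ m hC₀
  have hup : auxS K m ≤ Real.log 2 + Real.log m + D := by
    have a1 := auxS_mono K h2.le
    have a2 := (hD' (C₀ * (n+1))).1
    have a3 := (abs_le.1 (hD (n+1) (Nat.le_add_left 1 n))).2
    have a4 : Real.log ((n+1:ℕ):ℝ) ≤ Real.log (2 * m) := by
      apply Real.log_le_log (by positivity)
      exact_mod_cast (by linarith : n + 1 ≤ 2 * m)
    rw [Real.log_mul (by norm_num) (by positivity)] at a4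
    linarith
  have hlo : Real.log m - (Real.log 2 + Real.log C₀ + D + D') ≤ auxS K m := by
    rcases Nat.eq_zero_or_pos n with h0 | hpos
    · have b1 := auxS_nonneg K m
      have h3 : m ≤ C₀ := by rw [h0] at h2; simpa using h2.le
      have : Real.log m ≤ Real.log C₀ := Real.log_le_log (by linarith)
        (by exact_mod_cast h3)
      linarith
    · have a1 := auxS_mono K h1
      have a2 := (hD' (C₀ * n)).2
      have a3 := (abs_le.1 (hD n hpos)).1
      have hn0 : (0:ℝ) < n := by exact_mod_cast hpos
      have a4 : Real.log m ≤ Real.log (2 * C₀ * n) := by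
        apply Real.log_le_log (by linarith)
        have : m ≤ 2 * C₀ * n := by nlinarith
        exact_mod_cast this
      rw [Real.log_mul (by positivity) (by positivity), Real.log_mul (by norm_num) (by positivity)] at a4
      linarith
  rw [abs_le]
  constructor <;> linarith

noncomputable def auxW (k : ℕ) : Finset (PrimeIdeal K) :=
  ((auxP K k).filter (fun P => Ideal.absNorm P = k)).subtype
    (fun p : Ideal (𝓞 K) => p ≠ ⊥ ∧ p.IsPrime)

lemma mem_auxW (k : ℕ) (s : PrimeIdeal K) : s ∈ auxW K k ↔ Ideal.absNorm s.1 = k := by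
  unfold auxW
  refine Finset.mem_subtype.trans ?_
  rw [Finset.mem_filter, mem_auxP]
  constructor
  · exact fun h => h.2
  · exact fun h => ⟨⟨h.le, s.2⟩, h⟩

noncomputable def auxA (k : ℕ) : ℝ :=
  ∑ s ∈ auxW K k, Real.log (Ideal.absNorm s.1) / Ideal.absNorm s.1

lemma auxA_nonneg (k : ℕ) : 0 ≤ auxA K k :=
  Finset.sum_nonneg fun _ _ => div_nonneg (Real.log_natCast_nonneg _) (by positivity)

lemma auxA_sum (n : ℕ) : ∑ k ∈ Finset.Ioc 0 n, auxA K k = auxS K n := by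
  unfold auxS
  rw [← Finset.sum_fiberwise_of_maps_to (s := auxP K n) (t := Finset.Ioc 0 n)
    (g := fun P => Ideal.absNorm P)]
  · apply Finset.sum_congr rfl
    intro k hk
    rw [Finset.mem_Ioc] at hk
    unfold auxA auxW
    refine (Finset.sum_subtype_eq_sum_filter
      (p := fun p : Ideal (𝓞 K) => p ≠ ⊥ ∧ p.IsPrime)
      (f := fun P : Ideal (𝓞 K) => Real.log (Ideal.absNorm P) / Ideal.absNorm P)).trans ?_
    apply Finset.sum_congr _ (fun _ _ => rfl)
    ext P
    simp only [Finset.mem_filter, mem_auxP]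
    constructor
    · rintro ⟨⟨⟨_, h2⟩, h3⟩, _⟩
      exact ⟨⟨h3.le.trans hk.2, h2⟩, h3⟩
    · rintro ⟨⟨_, h2⟩, h3⟩
      exact ⟨⟨⟨h3.le, h2⟩, h3⟩, h2⟩
  · intro P hP
    rw [mem_auxP] at hP
    rw [Finset.mem_Ioc]
    have := aux_two_le K P hP.2.1 hP.2.2
    exact ⟨by omega, hP.1⟩

/-- **A partial summation estimate over prime ideals.** For all sufficiently large `y`,
for any prime ideal `𝔭` with `y^{1/3} ≤ 𝒩(𝔭) < y^{1/2}` and `u = log y / log 𝒩(𝔭)`,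
and with `𝔔(y^{1/2})` the `≺`-smallest prime ideal of norm `≥ y^{1/2}`,
`∑_{𝔭 ≼ 𝔰 ≺ 𝔔(y^{1/2})} (y/𝒩(𝔰))/log(y/𝒩(𝔰)) = (log(u−1)/u)·y/log 𝒩(𝔭) + O(y/log² y)`. -/
theorem prime_sum_partial_summation
    (lt : PrimeIdeal K → PrimeIdeal K → Prop)
    (hord : IsStrictTotalOrder (PrimeIdeal K) lt)
    (hcompat : ∀ p q : PrimeIdeal K, Ideal.absNorm p.1 < Ideal.absNorm q.1 → lt p q) :
    ∃ c : ℝ, ∃ y₀ : ℝ, ∀ y : ℝ, y₀ ≤ y →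
      ∀ p : PrimeIdeal K,
        y ^ ((1 : ℝ)/3) ≤ (Ideal.absNorm p.1 : ℝ) →
        (Ideal.absNorm p.1 : ℝ) < y ^ ((1 : ℝ)/2) →
      -- `Q` is the `≺`-smallest prime ideal with norm `≥ y^{1/2}`
      ∀ Q : PrimeIdeal K,
        y ^ ((1 : ℝ)/2) ≤ (Ideal.absNorm Q.1 : ℝ) →
        (∀ s : PrimeIdeal K, y ^ ((1 : ℝ)/2) ≤ (Ideal.absNorm s.1 : ℝ) → ¬ lt s Q) →
      |(∑' s : PrimeIdeal K,
            if (lt p s ∨ p = s) ∧ lt s Q then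
              (y / (Ideal.absNorm s.1 : ℝ)) / Real.log (y / (Ideal.absNorm s.1 : ℝ))
            else 0) -
          Real.log (Real.log y / Real.log (Ideal.absNorm p.1 : ℝ) - 1) /
              (Real.log y / Real.log (Ideal.absNorm p.1 : ℝ)) *
            (y / Real.log (Ideal.absNorm p.1 : ℝ))|
        ≤ c * y / (Real.log y)^2 := by
  obtain ⟨C, hC⟩ := aux_mertens K
  refine ⟨6 * (4*C+3), 8, fun y hy p hp1 hp2 Q hQ1 hQ2 => ?_⟩
  set z := Ideal.absNorm p.1 with hz
  have hy0 : 0 < y := by linarith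
  have hz2 : 2 ≤ z := aux_two_le K p.1 p.2.1 p.2.2
  have hzr : (2:ℝ) ≤ z := by exact_mod_cast hz2
  set r := y ^ ((1:ℝ)/2) with hr
  have hr0 : 0 < r := Real.rpow_pos_of_pos hy0 _
  have hlr : Real.log r = Real.log y / 2 := by rw [hr, Real.log_rpow hy0]; ring
  have hL : 0 < Real.log y := Real.log_pos (by linarith)
  have hlz : 0 < Real.log z := Real.log_pos (by linarith)
  have hz1 : Real.log y / 3 ≤ Real.log z := by
    have h := Real.log_le_log (Real.rpow_pos_of_pos hy0 _) hp1
    rw [Real.log_rpow hy0] at h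
    linarith
  set m := ⌈r⌉₊ - 1 with hm
  have hc1 : 1 ≤ ⌈r⌉₊ := Nat.one_le_iff_ne_zero.2 (Nat.ceil_pos.2 hr0).ne'
  have hmr : ∀ k : ℕ, k ≤ m ↔ (k:ℝ) < r := by
    intro k
    rw [← Nat.lt_ceil]
    omega
  have hzm : z ≤ m := (hmr z).2 hp2
  have hm0 : (0:ℝ) < m := by exact_mod_cast (by omega : 0 < m)
  have hm1 : Real.log m ≤ Real.log y / 2 := by
    rw [← hlr]
    exact Real.log_le_log hm0 ((hmr m).1 le_rfl).le
  have hm2 : Real.log y / 2 ≤ Real.log ((m+1:ℕ):ℝ) := by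
    rw [← hlr]
    apply Real.log_le_log hr0
    by_contra h
    push Not at h
    have := (hmr (m+1)).2 h
    omega
  -- characterisation of the order conditions
  have hQ : ∀ s : PrimeIdeal K, lt s Q ↔ Ideal.absNorm s.1 ≤ m := by
    intro s
    rw [hmr]
    constructor
    · intro h
      by_contra h2
      push Not at h2
      exact hQ2 s h2 h
    · intro h
      apply hcompat
      exact_mod_cast h.trans_le hQ1
  have hpl : ∀ s : PrimeIdeal K, z < Ideal.absNorm s.1 → lt p s := fun s h => hcompat p s h
  have hpl2 : ∀ s : PrimeIdeal K, (lt p s ∨ p = s) → z ≤ Ideal.absNorm s.1 := by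
    intro s h
    by_contra h2
    push Not at h2
    have h3 := hcompat s p h2
    rcases h with h | h
    · exact hord.irrefl p (hord.trans _ _ _ h h3)
    · rw [hz, h] at h2
      exact lt_irrefl _ h2
  set f : ℕ → ℝ := fun k => 1 / (Real.log k * (Real.log y - Real.log k)) with hf
  have hterm : ∀ k : ℕ, 2 ≤ k →
      (y / (k:ℝ)) / Real.log (y / (k:ℝ)) = y * (Real.log k / k * f k) := by
    intro k hk
    have hk2 : (2:ℝ) ≤ k := by exact_mod_cast hk
    have hlk : 0 < Real.log k := Real.log_pos (by linarith)
    rw [Real.log_div (by positivity) (by positivity)]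
    simp only [hf]
    by_cases h : Real.log y - Real.log k = 0
    · simp [h]
    · field_simp
  have hfz : 0 ≤ f z := by
    have : Real.log z ≤ Real.log m := Real.log_le_log (by linarith) (by exact_mod_cast hzm)
    simp only [hf]
    apply one_div_nonneg.2
    apply mul_nonneg hlz.le
    linarith
  set F : PrimeIdeal K → ℝ := fun s => if (lt p s ∨ p = s) ∧ lt s Q then
    (y / (Ideal.absNorm s.1 : ℝ)) / Real.log (y / (Ideal.absNorm s.1 : ℝ)) else 0 with hF
  have htsum : ∑' s, F s = ∑ k ∈ Finset.Ioc 0 m, ∑ s ∈ auxW K k, F s := by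
    rw [tsum_eq_sum (s := (Finset.Ioc 0 m).biUnion (auxW K)), Finset.sum_biUnion]
    · intro i _ j _ hij
      rw [Function.onFun, Finset.disjoint_left]
      intro s h1 h2
      rw [mem_auxW] at h1 h2
      exact hij (h1.symm.trans h2)
    · intro s hs
      simp only [hF]
      rw [if_neg]
      rintro ⟨_, h2⟩
      apply hs
      rw [Finset.mem_biUnion]
      have := aux_two_le K s.1 s.2.1 s.2.2
      exact ⟨_, Finset.mem_Ioc.2 ⟨by omega, (hQ s).1 h2⟩, (mem_auxW K _ s).2 rfl⟩
  have hlow : ∀ k ∈ Finset.Ioo 0 z, ∑ s ∈ auxW K k, F s = 0 := by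
    intro k hk
    rw [Finset.mem_Ioo] at hk
    apply Finset.sum_eq_zero
    intro s hs
    rw [mem_auxW] at hs
    simp only [hF]
    rw [if_neg]
    rintro ⟨h1, _⟩
    have := hpl2 s h1
    omega
  have hhigh : ∀ k ∈ Finset.Ioc z m, ∑ s ∈ auxW K k, F s = y * (auxA K k * f k) := by
    intro k hk
    rw [Finset.mem_Ioc] at hk
    unfold auxA
    rw [Finset.sum_mul, Finset.mul_sum]
    apply Finset.sum_congr rfl
    intro s hs
    rw [mem_auxW] at hs
    simp only [hF]
    rw [if_pos ⟨Or.inl (hpl s (by omega)), (hQ s).2 (by omega)⟩, hs, hterm k (by omega)]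
  set τ := (∑ s ∈ auxW K z, F s) / y with hτ
  have hFz : ∀ s ∈ auxW K z, 0 ≤ F s ∧
      F s ≤ y * (Real.log (Ideal.absNorm s.1) / Ideal.absNorm s.1 * f z) := by
    intro s hs
    rw [mem_auxW] at hs
    have h0 : 0 ≤ y * (Real.log z / z * f z) := by positivity
    simp only [hF]
    rw [hs, hterm z hz2]
    split_ifs
    · exact ⟨h0, le_rfl⟩
    · exact ⟨le_rfl, h0⟩
  have hτ0 : 0 ≤ τ := div_nonneg (Finset.sum_nonneg fun s hs => (hFz s hs).1) hy0.le
  have hτ1 : τ ≤ auxA K z * f z := by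
    rw [hτ, div_le_iff₀ hy0]
    refine (Finset.sum_le_sum fun s hs => (hFz s hs).2).trans (le_of_eq ?_)
    rw [← Finset.mul_sum, ← Finset.sum_mul]
    unfold auxA
    ring
  have hsplit : ∑ k ∈ Finset.Ioc 0 m, ∑ s ∈ auxW K k, F s
      = y * (τ + ∑ k ∈ Finset.Ioc z m, auxA K k * f k) := by
    have e1 : Finset.Ioc 0 m = Finset.Ioo 0 z ∪ (insert z (Finset.Ioc z m)) := by
      ext k
      simp only [Finset.mem_union, Finset.mem_insert, Finset.mem_Ioc, Finset.mem_Ioo]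
      omega
    rw [e1, Finset.sum_union, Finset.sum_eq_zero hlow, Finset.sum_insert (by simp),
      Finset.sum_congr rfl hhigh, ← Finset.mul_sum, hτ]
    · field_simp
      ring
    · rw [Finset.disjoint_left]
      intro k h1 h2
      simp only [Finset.mem_insert, Finset.mem_Ioc, Finset.mem_Ioo] at h1 h2
      omega
  have main := aux_partial (auxA K) (auxA_nonneg K) C
    (fun n hn => by rw [auxA_sum]; exact hC n hn) y hy z m hz2 hz1 hzm hm1 hm2 τ hτ0 hτ1
  rw [htsum, hsplit]
  have e2 : y * (τ + ∑ k ∈ Finset.Ioc z m, auxA K k * f k) -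
      Real.log (Real.log y / Real.log z - 1) / (Real.log y / Real.log z) * (y / Real.log z)
      = y * (τ + ∑ k ∈ Finset.Ioc z m, auxA K k * f k -
        Real.log (Real.log y / Real.log z - 1) / Real.log y) := by
    generalize Real.log (Real.log y / Real.log z - 1) = w
    field_simp
  rw [e2, abs_mul, abs_of_pos hy0]
  refine (mul_le_mul_of_nonneg_left main hy0.le).trans (le_of_eq ?_)
  ring
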